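/- Characterization of defeasible non-provability: for every propositional defeasible theory T and literal q, T ⊢ -∂q if and only if M_∂(q)=False for every defeasible model M of T. -/

import Mathlib

/-- A literal is an atom or its negation. -/
inductive Lit (Atom : Type) where
  | pos : Atom → Lit Atom
  | neg : Atom → Lit Atom
  deriving DecidableEq

/-- The complement `~q` of a literal `q`. -/
def Lit.compl {Atom : Type} : Lit Atom → Lit Atom
  | .pos a => .neg a
  | .neg a => .pos a

/-- The three kinds of rules: strict, defeasible, defeater. -/
inductive RuleKind where
  | strict
  | defeasible
  | defeater
  deriving DecidableEq

/-- A rule: a kind, a finite set of literals as body (antecedent), and a head literal. -/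
structure DRule (Atom : Type) where
  kind : RuleKind
  body : Finset (Lit Atom)
  head : Lit Atom
  deriving DecidableEq

/-- A rule is strict-or-defeasible (a "supportive" rule). -/
def DRule.isSd {Atom : Type} (r : DRule Atom) : Prop :=
  r.kind = RuleKind.strict ∨ r.kind = RuleKind.defeasible

/-- A propositional defeasible theory: finite set of facts, finite set of rules,
and a superiority relation on rules. -/
structure DTheory (Atom : Type) where
  facts : Finset (Lit Atom)
  rules : Finset (DRule Atom)
  sup : DRule Atom → DRule Atom → Prop

/-- Acyclicity of the superiority relation. -/
def SupAcyclic {Atom : Type} (T : DTheory Atom) : Prop :=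
  ∀ r : DRule Atom, ¬ Relation.TransGen T.sup r r

/-- Conclusions: tagged literals +Δq, -Δq, +∂q, -∂q. -/
inductive Concl (Atom : Type) where
  | plusDelta : Lit Atom → Concl Atom
  | minusDelta : Lit Atom → Concl Atom
  | plusPartial : Lit Atom → Concl Atom
  | minusPartial : Lit Atom → Concl Atom
  deriving DecidableEq

/-- The inference rules of DL: `Licensed T prev c` holds when the conclusion `c`
may be appended to a derivation whose preceding part is `prev`. -/
def Licensed {Atom : Type} (T : DTheory Atom)
    (prev : List (Concl Atom)) : Concl Atom → Prop
  | .plusDelta q =>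
      q ∈ T.facts ∨
      ∃ r ∈ T.rules, r.kind = RuleKind.strict ∧ r.head = q ∧
        ∀ a ∈ r.body, Concl.plusDelta a ∈ prev
  | .minusDelta q =>
      q ∉ T.facts ∧
      ∀ r ∈ T.rules, r.kind = RuleKind.strict → r.head = q →
        ∃ a ∈ r.body, Concl.minusDelta a ∈ prev
  | .plusPartial q =>
      (Concl.plusDelta q ∈ prev) ∨
      ((∃ r ∈ T.rules, r.isSd ∧ r.head = q ∧
          ∀ a ∈ r.body, Concl.plusPartial a ∈ prev) ∧
       (Concl.minusDelta q.compl ∈ prev) ∧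
       ∀ s ∈ T.rules, s.head = q.compl →
         ((∃ a ∈ s.body, Concl.minusPartial a ∈ prev) ∨
          (∃ t ∈ T.rules, t.isSd ∧ t.head = q ∧ T.sup t s ∧
            ∀ a ∈ t.body, Concl.plusPartial a ∈ prev)))
  | .minusPartial q =>
      (Concl.minusDelta q ∈ prev) ∧
      ((∀ r ∈ T.rules, r.isSd → r.head = q →
          ∃ a ∈ r.body, Concl.minusPartial a ∈ prev) ∨
       (Concl.plusDelta q.compl ∈ prev) ∨
       (∃ s ∈ T.rules, s.head = q.compl ∧
          (∀ a ∈ s.body, Concl.plusPartial a ∈ prev) ∧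
          ∀ t ∈ T.rules, t.isSd → t.head = q →
            ((∃ a ∈ t.body, Concl.minusPartial a ∈ prev) ∨ ¬ T.sup t s)))

/-- A derivation: each element of the sequence is licensed given the preceding part. -/
def DLDerivation {Atom : Type} (T : DTheory Atom)
    (P : List (Concl Atom)) : Prop :=
  ∀ i : Fin P.length, Licensed T (P.take i) (P.get i)

/-- `T ⊢ c`: some derivation in `T` ends with conclusion `c`. -/
def DLProves {Atom : Type} (T : DTheory Atom) (c : Concl Atom) : Prop :=
  ∃ P : List (Concl Atom), DLDerivation T P ∧ P.getLast? = some c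

/-- A defeasible interpretation: two partial functions from literals to booleans
(modelled as `Option Bool`-valued functions), `del` for definite knowledge (Δ) and
`par` for defeasible belief (∂). -/
structure DInterp (Atom : Type) where
  del : Lit Atom → Option Bool
  par : Lit Atom → Option Bool

/-- The coherence conditions on defeasible interpretations: what is known is believed,
and what is not believed is not known. -/
def DInterp.Coherent {Atom : Type} (I : DInterp Atom) : Prop :=
  (∀ q : Lit Atom, I.del q = some true → I.par q = some true) ∧
  (∀ q : Lit Atom, I.par q = some false → I.del q = some false)

open Classical in
/-- Kleene conjunction of a partial boolean function over a finite set of literals: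
`False` if some member maps to `False`, `True` if every member maps to `True`,
undefined otherwise. -/
noncomputable def kleeneAll {Atom : Type} (f : Lit Atom → Option Bool)
    (S : Finset (Lit Atom)) : Option Bool :=
  if ∃ a ∈ S, f a = some false then some false
  else if ∀ a ∈ S, f a = some true then some true
  else none

/-- The four model conditions (MΔ+), (MΔ-), (M∂+), (M∂-). -/
def ModelConditions {Atom : Type} (T : DTheory Atom)
    (I : DInterp Atom) : Prop :=
  (∀ q : Lit Atom,
    I.del q = some true ↔
      (q ∈ T.facts ∨
       ∃ r ∈ T.rules, r.kind = RuleKind.strict ∧ r.head = q ∧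
         kleeneAll I.del r.body = some true)) ∧
  (∀ q : Lit Atom,
    I.del q = some false ↔
      (q ∉ T.facts ∧
       ∀ r ∈ T.rules, r.kind = RuleKind.strict → r.head = q →
         kleeneAll I.del r.body = some false)) ∧
  (∀ q : Lit Atom,
    I.par q = some true ↔
      (I.del q = some true ∨
       ((∃ r ∈ T.rules, r.isSd ∧ r.head = q ∧ kleeneAll I.par r.body = some true) ∧
        I.del q.compl = some false ∧
        ∀ s ∈ T.rules, s.head = q.compl →
          (kleeneAll I.par s.body = some false ∨
           ∃ t ∈ T.rules, t.isSd ∧ t.head = q ∧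
             kleeneAll I.par t.body = some true ∧ T.sup t s)))) ∧
  (∀ q : Lit Atom,
    I.par q = some false ↔
      (I.del q = some false ∧
       ((∀ r ∈ T.rules, r.isSd → r.head = q → kleeneAll I.par r.body = some false) ∨
        I.del q.compl = some true ∨
        (∃ s ∈ T.rules, s.head = q.compl ∧ kleeneAll I.par s.body = some true ∧
          ∀ t ∈ T.rules, t.isSd → t.head = q →
            (kleeneAll I.par t.body = some false ∨ ¬ T.sup t s)))))

/-- A defeasible model of `T`: a defeasible interpretation (coherent pair of partial
functions) satisfying the four model conditions. -/
def IsModel {Atom : Type} (T : DTheory Atom) (I : DInterp Atom) : Prop :=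
  I.Coherent ∧ ModelConditions T I

/-- A conclusion holds in an interpretation. -/
def DLHolds {Atom : Type} (I : DInterp Atom) : Concl Atom → Prop
  | .plusDelta q => I.del q = some true
  | .minusDelta q => I.del q = some false
  | .plusPartial q => I.par q = some true
  | .minusPartial q => I.par q = some false



/-- Inductive provability. -/
inductive Prv {Atom : Type} (T : DTheory Atom) : Concl Atom → Prop
  | mk (prev : List (Concl Atom)) (c : Concl Atom) (h : ∀ x ∈ prev, Prv T x)
      (hl : Licensed T prev c) : Prv T c

theorem Licensed.mono {Atom : Type} {T : DTheory Atom} {P Q : List (Concl Atom)}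
    (hPQ : ∀ x ∈ P, x ∈ Q) {c : Concl Atom} (h : Licensed T P c) : Licensed T Q c := by
  cases c with
  | plusDelta q =>
    rcases h with h | ⟨r, hr, hk, hh, hb⟩
    · exact Or.inl h
    · exact Or.inr ⟨r, hr, hk, hh, fun a ha => hPQ _ (hb a ha)⟩
  | minusDelta q =>
    refine ⟨h.1, fun r hr hk hh => ?_⟩
    obtain ⟨a, ha, hp⟩ := h.2 r hr hk hh
    exact ⟨a, ha, hPQ _ hp⟩
  | plusPartial q =>
    rcases h with h | ⟨⟨r, hr, hk, hh, hb⟩, hd, hs⟩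
    · exact Or.inl (hPQ _ h)
    · refine Or.inr ⟨⟨r, hr, hk, hh, fun a ha => hPQ _ (hb a ha)⟩, hPQ _ hd, fun s hs1 hs2 => ?_⟩
      rcases hs s hs1 hs2 with ⟨a, ha, hp⟩ | ⟨t, ht, h1, h2, h3, h4⟩
      · exact Or.inl ⟨a, ha, hPQ _ hp⟩
      · exact Or.inr ⟨t, ht, h1, h2, h3, fun a ha => hPQ _ (h4 a ha)⟩
  | minusPartial q =>
    refine ⟨hPQ _ h.1, ?_⟩
    rcases h.2 with h | h | ⟨s, hs, hh, hb, ht⟩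
    · refine Or.inl fun r hr hk hh => ?_
      obtain ⟨a, ha, hp⟩ := h r hr hk hh
      exact ⟨a, ha, hPQ _ hp⟩
    · exact Or.inr (Or.inl (hPQ _ h))
    · refine Or.inr (Or.inr ⟨s, hs, hh, fun a ha => hPQ _ (hb a ha), fun t h1 h2 h3 => ?_⟩)
      rcases ht t h1 h2 h3 with ⟨a, ha, hp⟩ | h
      · exact Or.inl ⟨a, ha, hPQ _ hp⟩
      · exact Or.inr h

theorem DLDerivation.snoc {Atom : Type} {T : DTheory Atom} {P : List (Concl Atom)}
    (hP : DLDerivation T P) {c : Concl Atom} (h : Licensed T P c) :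
    DLDerivation T (P ++ [c]) := by
  rintro ⟨i, hi⟩
  by_cases hlt : i < P.length
  · have := hP ⟨i, hlt⟩
    simpa [List.take_append_of_le_length hlt.le, List.getElem_append_left hlt] using this
  · have : i = P.length := by simp at hi; omega
    subst this
    simpa using h

theorem Prv.ext {Atom : Type} {T : DTheory Atom} {c : Concl Atom} (h : Prv T c) :
    ∀ P, DLDerivation T P → ∃ R, DLDerivation T (R ++ [c]) ∧ ∀ x ∈ P, x ∈ R := by
  induction h with
  | mk prev c h hl ih =>
    intro P hP
    have key : ∀ l : List (Concl Atom), (∀ x ∈ l, x ∈ prev) →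
        ∃ R, DLDerivation T R ∧ (∀ x ∈ P, x ∈ R) ∧ ∀ x ∈ l, x ∈ R := by
      intro l
      induction l with
      | nil => exact fun _ => ⟨P, hP, fun _ h => h, by simp⟩
      | cons y l ihl =>
        intro hl
        obtain ⟨R, h1, h2, h3⟩ := ihl fun x hx => hl x (List.mem_cons_of_mem _ hx)
        obtain ⟨R', h4, h5⟩ := ih y (hl y List.mem_cons_self) R h1
        refine ⟨R' ++ [y], h4, fun x hx => by simp [h5 x (h2 x hx)], fun x hx => ?_⟩
        rcases List.mem_cons.1 hx with rfl | hx
        · simp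
        · simp [h5 x (h3 x hx)]
    obtain ⟨R, h1, h2, h3⟩ := key prev fun _ h => h
    exact ⟨R, h1.snoc (hl.mono h3), h2⟩

theorem prv_iff {Atom : Type} {T : DTheory Atom} {c : Concl Atom} :
    DLProves T c ↔ Prv T c := by
  constructor
  · rintro ⟨P, hP, hc⟩
    have key : ∀ i (hi : i < P.length), Prv T P[i] := by
      intro i
      induction i using Nat.strong_induction_on with
      | _ i ih =>
        intro hi
        refine Prv.mk (P.take i) _ ?_ (hP ⟨i, hi⟩)
        intro x hx
        obtain ⟨j, hj, rfl⟩ := List.mem_iff_getElem.1 hx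
        rw [List.getElem_take]
        exact ih j (by simp at hj; omega) _
    obtain ⟨i, hi, rfl⟩ := List.mem_iff_getElem.1 (List.mem_of_getLast? hc)
    exact key i hi
  · intro h
    obtain ⟨R, hR, -⟩ := h.ext [] (fun i => i.elim0)
    exact ⟨_, hR, by simp⟩

/-- The licensing conditions closed under provability. -/
def LicS {Atom : Type} (T : DTheory Atom) (S : Concl Atom → Prop) : Concl Atom → Prop
  | .plusDelta q =>
      q ∈ T.facts ∨
      ∃ r ∈ T.rules, r.kind = RuleKind.strict ∧ r.head = q ∧
        ∀ a ∈ r.body, S (Concl.plusDelta a)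
  | .minusDelta q =>
      q ∉ T.facts ∧
      ∀ r ∈ T.rules, r.kind = RuleKind.strict → r.head = q →
        ∃ a ∈ r.body, S (Concl.minusDelta a)
  | .plusPartial q =>
      (S (Concl.plusDelta q)) ∨
      ((∃ r ∈ T.rules, r.isSd ∧ r.head = q ∧
          ∀ a ∈ r.body, S (Concl.plusPartial a)) ∧
       (S (Concl.minusDelta q.compl)) ∧
       ∀ s ∈ T.rules, s.head = q.compl →
         ((∃ a ∈ s.body, S (Concl.minusPartial a)) ∨
          (∃ t ∈ T.rules, t.isSd ∧ t.head = q ∧ 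
            (∀ a ∈ t.body, S (Concl.plusPartial a)) ∧ T.sup t s)))
  | .minusPartial q =>
      (S (Concl.minusDelta q)) ∧
      ((∀ r ∈ T.rules, r.isSd → r.head = q →
          ∃ a ∈ r.body, S (Concl.minusPartial a)) ∨
       (S (Concl.plusDelta q.compl)) ∨
       (∃ s ∈ T.rules, s.head = q.compl ∧
          (∀ a ∈ s.body, S (Concl.plusPartial a)) ∧
          ∀ t ∈ T.rules, t.isSd → t.head = q →
            ((∃ a ∈ t.body, S (Concl.minusPartial a)) ∨ ¬ T.sup t s)))

theorem LicS.mono {Atom : Type} {T : DTheory Atom} {P Q : Concl Atom → Prop}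
    (hPQ : ∀ x, P x → Q x) {c : Concl Atom} (h : LicS T P c) : LicS T Q c := by
  cases c with
  | plusDelta q =>
    rcases h with h | ⟨r, hr, hk, hh, hb⟩
    · exact Or.inl h
    · exact Or.inr ⟨r, hr, hk, hh, fun a ha => hPQ _ (hb a ha)⟩
  | minusDelta q =>
    refine ⟨h.1, fun r hr hk hh => ?_⟩
    obtain ⟨a, ha, hp⟩ := h.2 r hr hk hh
    exact ⟨a, ha, hPQ _ hp⟩
  | plusPartial q =>
    rcases h with h | ⟨⟨r, hr, hk, hh, hb⟩, hd, hs⟩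
    · exact Or.inl (hPQ _ h)
    · refine Or.inr ⟨⟨r, hr, hk, hh, fun a ha => hPQ _ (hb a ha)⟩, hPQ _ hd, fun s hs1 hs2 => ?_⟩
      rcases hs s hs1 hs2 with ⟨a, ha, hp⟩ | ⟨t, ht, h1, h2, h3, h4⟩
      · exact Or.inl ⟨a, ha, hPQ _ hp⟩
      · exact Or.inr ⟨t, ht, h1, h2, fun a ha => hPQ _ (h3 a ha), h4⟩
  | minusPartial q =>
    refine ⟨hPQ _ h.1, ?_⟩
    rcases h.2 with h | h | ⟨s, hs, hh, hb, ht⟩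
    · refine Or.inl fun r hr hk hh => ?_
      obtain ⟨a, ha, hp⟩ := h r hr hk hh
      exact ⟨a, ha, hPQ _ hp⟩
    · exact Or.inr (Or.inl (hPQ _ h))
    · refine Or.inr (Or.inr ⟨s, hs, hh, fun a ha => hPQ _ (hb a ha), fun t h1 h2 h3 => ?_⟩)
      rcases ht t h1 h2 h3 with ⟨a, ha, hp⟩ | h
      · exact Or.inl ⟨a, ha, hPQ _ hp⟩
      · exact Or.inr h

theorem licensed_iff {Atom : Type} {T : DTheory Atom} {P : List (Concl Atom)}
    {c : Concl Atom} : Licensed T P c ↔ LicS T (· ∈ P) c := by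
  cases c with
  | plusPartial q =>
    simp only [Licensed, LicS]
    simp only [and_comm (a := T.sup _ _)]
  | _ => exact Iff.rfl

/-- The literal of a conclusion. -/
def Concl.lit {Atom : Type} : Concl Atom → Lit Atom
  | .plusDelta q => q
  | .minusDelta q => q
  | .plusPartial q => q
  | .minusPartial q => q

theorem LicS.restrict {Atom : Type} {T : DTheory Atom} {P Q : Concl Atom → Prop}
    {c : Concl Atom}
    (hPQ : ∀ x, ((∃ r ∈ T.rules, x.lit ∈ r.body) ∨ x.lit = c.lit ∨ x.lit = c.lit.compl) →
      P x → Q x) (h : LicS T P c) : LicS T Q c := by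
  have h' : LicS T (fun x => P x ∧ ((∃ r ∈ T.rules, x.lit ∈ r.body) ∨ x.lit = c.lit ∨
      x.lit = c.lit.compl)) c := by
    cases c <;> simp only [LicS, Concl.lit] at h ⊢ <;> grind
  exact h'.mono fun x hx => hPQ x hx.2 hx.1

theorem Prv.iff_licS {Atom : Type} {T : DTheory Atom} {c : Concl Atom} :
    Prv T c ↔ LicS T (Prv T) c := by
  classical
  constructor
  · rintro ⟨prev, _, h, hl⟩
    exact (licensed_iff.1 hl).mono h
  · intro h
    let L : List (Lit Atom) := c.lit :: c.lit.compl :: (T.rules.biUnion DRule.body).toList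
    let C : List (Concl Atom) := L.map .plusDelta ++ L.map .minusDelta ++ L.map .plusPartial
      ++ L.map .minusPartial
    refine Prv.mk (C.filter (fun x => Prv T x)) c (fun x hx => by simpa using (List.mem_filter.1 hx).2) ?_
    refine licensed_iff.2 (h.restrict fun x hx hp => ?_)
    refine List.mem_filter.2 ⟨?_, by simpa using hp⟩
    have hL : x.lit ∈ L := by
      rcases hx with h | h | h <;> simp [L, h]
    cases x <;> simp only [Concl.lit] at hL <;> simp [C, hL]

theorem Prv.induct {Atom : Type} {T : DTheory Atom} {S : Concl Atom → Prop}
    (hS : ∀ c, LicS T (fun x => Prv T x ∧ S x) c → S c) {c : Concl Atom} (h : Prv T c) : S c := by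
  induction h with
  | mk prev c h hl ih =>
    exact hS c ((licensed_iff.1 hl).mono fun x hx => ⟨h x hx, ih x hx⟩)

theorem consΔ {Atom : Type} {T : DTheory Atom} {q : Lit Atom}
    (h : Prv T (.plusDelta q)) : ¬ Prv T (.minusDelta q) := by
  have := Prv.induct (T := T) (S := fun c => match c with
    | .plusDelta q => ¬ Prv T (.minusDelta q)
    | _ => True) ?_ h
  · exact this
  · intro c hc
    cases c with
    | plusDelta q =>
      intro hm
      rw [Prv.iff_licS] at hm
      simp only [LicS] at hc hm
      grind
    | _ => trivial

theorem consP {Atom : Type} {T : DTheory Atom} {q : Lit Atom}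
    (h : Prv T (.plusPartial q)) : ¬ Prv T (.minusPartial q) := by
  have := Prv.induct (T := T) (S := fun c => match c with
    | .plusPartial q => ¬ Prv T (.minusPartial q)
    | .minusPartial q => ¬ Prv T (.plusPartial q)
    | _ => True) ?_ h
  · exact this
  · intro c hc
    cases c with
    | plusPartial q =>
      intro hm
      rw [Prv.iff_licS] at hm
      have hd := @consΔ Atom T
      simp only [LicS] at hc hm
      rcases hc with hc | ⟨⟨r, hr, hk, hh, hb⟩, hd', hs⟩
      · exact hd hc.1 hm.1
      · rcases hm.2 with h | h | ⟨s, h1, h2, h3, h4⟩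
        · obtain ⟨a, ha, hp⟩ := h r hr hk hh
          exact (hb a ha).2 hp
        · exact hd h hd'.1
        · rcases hs s h1 h2 with ⟨a, ha, hp⟩ | ⟨t, ht, g1, g2, g3, g4⟩
          · have := h3 a ha
            exact hp.2 this
          · rcases h4 t ht g1 g2 with ⟨a, ha, hp⟩ | h
            · exact (g3 a ha).2 hp
            · exact h g4
    | minusPartial q =>
      intro hm
      rw [Prv.iff_licS] at hm
      have hd := @consΔ Atom T
      simp only [LicS] at hc hm
      rcases hm with hm | ⟨⟨r, hr, hk, hh, hb⟩, hd', hs⟩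
      · exact hd hm hc.1.1
      · rcases hc.2 with h | h | ⟨s, h1, h2, h3, h4⟩
        · obtain ⟨a, ha, hp⟩ := h r hr hk hh
          exact hp.2 (hb a ha)
        · exact hd h.1 hd'
        · rcases hs s h1 h2 with ⟨a, ha, hp⟩ | ⟨t, ht, g1, g2, g3, g4⟩
          · exact (h3 a ha).2 hp
          · rcases h4 t ht g1 g2 with ⟨a, ha, hp⟩ | h
            · exact hp.2 (g3 a ha)
            · exact h g4
    | _ => trivial

theorem kleene_false {Atom : Type} {f : Lit Atom → Option Bool} {S : Finset (Lit Atom)} :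
    kleeneAll f S = some false ↔ ∃ a ∈ S, f a = some false := by
  unfold kleeneAll
  split_ifs <;> simp_all

theorem kleene_true {Atom : Type} {f : Lit Atom → Option Bool} {S : Finset (Lit Atom)} :
    kleeneAll f S = some true ↔ ∀ a ∈ S, f a = some true := by
  unfold kleeneAll
  split_ifs with h1 h2
  · obtain ⟨a, ha, h⟩ := h1
    simp only [Option.some.injEq, Bool.false_eq_true, false_iff]
    intro h'
    simp [h' a ha] at h
  · simpa using h2
  · simpa using h2

theorem modelConditions_iff {Atom : Type} {T : DTheory Atom} {I : DInterp Atom} :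
    ModelConditions T I ↔ ∀ c, DLHolds I c ↔ LicS T (DLHolds I) c := by
  unfold ModelConditions
  simp only [kleene_false, kleene_true]
  constructor
  · rintro ⟨h1, h2, h3, h4⟩ (q | q | q | q)
    · exact h1 q
    · exact h2 q
    · exact h3 q
    · exact h4 q
  · intro h
    exact ⟨fun q => h (.plusDelta q), fun q => h (.minusDelta q), fun q => h (.plusPartial q),
      fun q => h (.minusPartial q)⟩

open Classical in
/-- The canonical model. -/
noncomputable def canon {Atom : Type} (T : DTheory Atom) : DInterp Atom where
  del q := if Prv T (.plusDelta q) then some true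
    else if Prv T (.minusDelta q) then some false else none
  par q := if Prv T (.plusPartial q) then some true
    else if Prv T (.minusPartial q) then some false else none

theorem canon_holds {Atom : Type} {T : DTheory Atom} : DLHolds (canon T) = Prv T := by
  funext c
  apply propext
  cases c with
  | plusDelta q => simp only [DLHolds, canon]; split_ifs <;> simp_all
  | minusDelta q =>
    have := @consΔ _ T q
    simp only [DLHolds, canon]; split_ifs <;> simp_all
  | plusPartial q => simp only [DLHolds, canon]; split_ifs <;> simp_all
  | minusPartial q =>
    have := @consP _ T q
    simp only [DLHolds, canon]; split_ifs <;> simp_all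

theorem canon_model {Atom : Type} {T : DTheory Atom} : IsModel T (canon T) := by
  refine ⟨⟨fun q h => ?_, fun q h => ?_⟩, modelConditions_iff.2 ?_⟩
  · change DLHolds (canon T) (.plusDelta q) at h
    change DLHolds (canon T) (.plusPartial q)
    rw [canon_holds] at *
    exact Prv.iff_licS.2 (Or.inl h)
  · change DLHolds (canon T) (.minusPartial q) at h
    change DLHolds (canon T) (.minusDelta q)
    rw [canon_holds] at *
    exact (Prv.iff_licS.1 h).1
  · rw [canon_holds]
    exact fun c => Prv.iff_licS

/-- Characterization of defeasible non-provability. -/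
theorem DL_minusPartial_char {Atom : Type} [Countable Atom] [DecidableEq Atom]
    (T : DTheory Atom) (hacyc : SupAcyclic T) (q : Lit Atom) :
    DLProves T (Concl.minusPartial q) ↔
      ∀ I : DInterp Atom, IsModel T I → I.par q = some false := by
  rw [prv_iff]
  constructor
  · intro h I hI
    have := Prv.induct (S := DLHolds I) (fun c hc =>
      (modelConditions_iff.1 hI.2 c).2 (hc.mono fun x hx => hx.2)) h
    exact this
  · intro h
    have h' : DLHolds (canon T) (.minusPartial q) := h _ canon_model
    rwa [canon_holds] at h'
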